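/- In the free group F on two generators a and b, if a cyclically reduced word w = a^{n₁} b^{m₁} a^{n₂} b^{m₂} ⋯ a^{n_k} b^{m_k} (with all n_i and all m_i nonzero, k ≥ 1) is a primitive element of F (i.e., w belongs to some free basis of F), then n_i · n_j > 0 for all i, j and m_i · m_j > 0 for all i, j; that is, all a-exponents have the same sign and all b-exponents have the same sign. -/

import Mathlib

/-- An element of the free group of rank two is *primitive* if it is part of a free
basis, equivalently it is the image of a generator under an automorphism. -/
def IsPrimitive (w : FreeGroup (Fin 2)) : Prop :=
  ∃ φ : FreeGroup (Fin 2) ≃* FreeGroup (Fin 2), φ (FreeGroup.of 0) = w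

/-!
A pair of minimal total length in its Nielsen class loses less than a whole factor to cancellation
in every reduced product of its entries and their inverses, so if it generates the free group, its
entries are the two generators up to order and inversion. Every basis `(u, v)` therefore arises from
`(a, b)` by Nielsen moves.

Up to signs of the entries and a common conjugation, these moves preserve the pairs obtained from
some `(a ^ ±1, b ^ ±1)` by multiplications alone: a division either undoes the last multiplication
or changes the sign of `a` or `b`. Hence a primitive `w` is conjugate to a product `z` of copies of
`a ^ ε` and `b ^ δ` with fixed signs `ε` and `δ`. Counting exponents with these signs is invariant
under conjugation and bounds the length of `z`, hence that of `w` if `w` is cyclically reduced.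
For `w = a ^ n₁ b ^ m₁ ⋯ a ^ n_k b ^ m_k` this reads `∑ (|nᵢ| + |mᵢ|) ≤ ∑ (ε nᵢ + δ mᵢ)`, which
forces `|nᵢ| = ε nᵢ` and `|mᵢ| = δ mᵢ` for all `i`.
-/

namespace PrimitiveWord

open FreeGroup

section Cancellation

variable {α : Type*}

theorem isReduced_invRev {L : List (α × Bool)} (hL : IsReduced L) : IsReduced (invRev L) := by
  classical rw [isReduced_iff_reduce_eq, reduce_invRev, hL.reduce_eq]

theorem exists_append_isReduced_invRev_append {X Y : List (α × Bool)} (hX : IsReduced X)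
    (hY : IsReduced Y) :
    ∃ P X' Y', X = P ++ X' ∧ Y = P ++ Y' ∧ IsReduced (invRev X' ++ Y') := by
  induction X generalizing Y with
  | nil => exact ⟨[], [], Y, rfl, rfl, hY⟩
  | cons x X ih =>
    cases Y with
    | nil => exact ⟨[], x :: X, [], rfl, rfl, by simpa using isReduced_invRev hX⟩
    | cons y Y =>
      by_cases hxy : x = y
      · subst hxy
        obtain ⟨P, X', Y', rfl, rfl, hred⟩ := ih hX.tail hY.tail
        exact ⟨x :: P, X', Y', rfl, rfl, hred⟩
      · refine ⟨[], x :: X, y :: Y, rfl, rfl, ?_⟩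
        have hcons : invRev (x :: X) = invRev X ++ [(x.1, !x.2)] := by simp [invRev]
        have hinv := isReduced_invRev hX
        rw [hcons] at hinv ⊢
        rw [List.append_assoc]
        refine List.isChain_append_cons_cons.2 ⟨hinv, fun hfst => ?_, hY⟩
        exact (Bool.eq_not.2 fun hsnd => hxy (Prod.ext hfst hsnd.symm)).symm

variable [DecidableEq α]

theorem norm_lt_norm_mul_self {x : FreeGroup α} (hx : x ≠ 1) : x.norm < (x * x).norm := by
  have hsplit := reduceCyclically.conj_conjugator_reduceCyclically x.toWord
  have hcore : reduceCyclically x.toWord ≠ [] := by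
    intro hnil
    rw [hnil, List.append_nil] at hsplit
    rw [← mk_toWord (x := x), ← hsplit, ← mul_mk, ← inv_mk, mul_inv_cancel] at hx
    exact hx rfl
  have hsq : (x * x).toWord = reduceCyclically.conjugator x.toWord ++
      (List.replicate 2 (reduceCyclically x.toWord)).flatten ++
        invRev (reduceCyclically.conjugator x.toWord) := by
    rw [← pow_two, toWord_pow,
      reduceCyclically.reduce_flatten_replicate_succ isReduced_toWord 1]
  have hlen := congrArg List.length hsplit
  have hpos := List.length_pos_iff.2 hcore
  simp only [List.length_append, invRev_length] at hlen
  simp only [FreeGroup.norm, hsq, List.length_append, List.length_flatten, List.map_replicate,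
    List.sum_replicate, smul_eq_mul, invRev_length]
  omega

/-- The Gromov product `(x | y)` based at `1` in the Cayley tree of a free group: the product
`x * y` loses `gromovProduct x⁻¹ y` letters of each factor to cancellation. The subtraction and the
division are exact, see `norm_inv_mul_add_two_mul_gromovProduct`. -/
def gromovProduct (x y : FreeGroup α) : ℕ :=
  (x.norm + y.norm - (x⁻¹ * y).norm) / 2

theorem inv_mul_eq_mk {x y : FreeGroup α} {P X Y : List (α × Bool)} (hx : x.toWord = P ++ X)
    (hy : y.toWord = P ++ Y) : x⁻¹ * y = mk (invRev X ++ Y) := by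
  rw [← mk_toWord (x := x), ← mk_toWord (x := y), hx, hy]
  simp only [← mul_mk, ← inv_mk]
  group

theorem exists_prefix_length_eq_gromovProduct (x y : FreeGroup α) :
    ∃ P X Y, x.toWord = P ++ X ∧ y.toWord = P ++ Y ∧
      (x⁻¹ * y).norm = X.length + Y.length ∧ P.length = gromovProduct x y := by
  obtain ⟨P, X, Y, hx, hy, hred⟩ :=
    exists_append_isReduced_invRev_append (isReduced_toWord (x := x)) (isReduced_toWord (x := y))
  have hnorm : (x⁻¹ * y).norm = X.length + Y.length := by
    rw [FreeGroup.norm, inv_mul_eq_mk hx hy, toWord_mk, hred.reduce_eq, List.length_append,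
      invRev_length]
  refine ⟨P, X, Y, hx, hy, hnorm, ?_⟩
  rw [gromovProduct, hnorm, FreeGroup.norm, FreeGroup.norm, hx, hy, List.length_append,
    List.length_append]
  omega

theorem norm_inv_mul_add_two_mul_gromovProduct (x y : FreeGroup α) :
    (x⁻¹ * y).norm + 2 * gromovProduct x y = x.norm + y.norm := by
  obtain ⟨P, X, Y, hx, hy, hnorm, hP⟩ := exists_prefix_length_eq_gromovProduct x y
  rw [hnorm, ← hP, FreeGroup.norm, FreeGroup.norm, hx, hy, List.length_append, List.length_append]
  ring

theorem norm_mul_add_two_mul_gromovProduct (x y : FreeGroup α) :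
    (x * y).norm + 2 * gromovProduct x⁻¹ y = x.norm + y.norm := by
  simpa using norm_inv_mul_add_two_mul_gromovProduct x⁻¹ y

theorem exists_suffix_length_eq_gromovProduct (x y : FreeGroup α) :
    ∃ X Y S, x.toWord = X ++ S ∧ y.toWord = Y ++ S ∧ S.length = gromovProduct x⁻¹ y⁻¹ := by
  obtain ⟨P, X, Y, hx, hy, -, hP⟩ := exists_prefix_length_eq_gromovProduct x⁻¹ y⁻¹
  refine ⟨invRev X, invRev Y, invRev P, ?_, ?_, by rw [← hP, invRev_length]⟩
  · rw [← invRev_append, ← hx, toWord_inv, invRev_invRev]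
  · rw [← invRev_append, ← hy, toWord_inv, invRev_invRev]

theorem length_le_gromovProduct {x y : FreeGroup α} {P : List (α × Bool)}
    (hx : P <+: x.toWord) (hy : P <+: y.toWord) : P.length ≤ gromovProduct x y := by
  obtain ⟨X, hX⟩ := hx
  obtain ⟨Y, hY⟩ := hy
  have hle : (x⁻¹ * y).norm ≤ (invRev X ++ Y).length := by
    rw [inv_mul_eq_mk hX.symm hY.symm]
    exact norm_mk_le
  have hadd := norm_inv_mul_add_two_mul_gromovProduct x y
  rw [FreeGroup.norm, FreeGroup.norm, FreeGroup.norm, ← hX, ← hY] at hadd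
  simp only [List.length_append, invRev_length, FreeGroup.norm] at hle hadd
  omega

theorem gromovProduct_comm (x y : FreeGroup α) : gromovProduct x y = gromovProduct y x := by
  rw [gromovProduct, gromovProduct, ← norm_inv_eq (x := x⁻¹ * y), mul_inv_rev, inv_inv,
    add_comm]

theorem gromovProduct_one_right (x : FreeGroup α) : gromovProduct x 1 = 0 := by
  simp [gromovProduct]

theorem two_mul_gromovProduct_inv_self_lt {x : FreeGroup α} (hx : x ≠ 1) :
    2 * gromovProduct x⁻¹ x < x.norm := by
  have hlt := norm_lt_norm_mul_self hx
  have hadd := norm_mul_add_two_mul_gromovProduct x x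
  omega

theorem min_gromovProduct_le (x y z : FreeGroup α) :
    min (gromovProduct x y) (gromovProduct y z) ≤ gromovProduct x z := by
  obtain ⟨P, X, Y, hx, hy, -, hP⟩ := exists_prefix_length_eq_gromovProduct x y
  obtain ⟨Q, Y', Z, hy', hz, -, hQ⟩ := exists_prefix_length_eq_gromovProduct y z
  rw [← hP, ← hQ, min_le_iff]
  rcases List.prefix_or_prefix_of_prefix ⟨Y, hy.symm⟩ ⟨Y', hy'.symm⟩ with hPQ | hQP
  · exact .inl (length_le_gromovProduct ⟨X, hx.symm⟩ (hPQ.trans ⟨Z, hz.symm⟩))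
  · exact .inr (length_le_gromovProduct (hQP.trans ⟨X, hx.symm⟩) ⟨Z, hz.symm⟩)

theorem gromovProduct_mul_right {x y z : FreeGroup α}
    (h : gromovProduct x y + gromovProduct y⁻¹ z < y.norm) :
    gromovProduct x (y * z) = gromovProduct x y := by
  have hself := norm_inv_mul_add_two_mul_gromovProduct y (y * z)
  rw [inv_mul_cancel_left] at hself
  have hmul := norm_mul_add_two_mul_gromovProduct y z
  have hcomm := gromovProduct_comm y (y * z)
  have hge := min_le_iff.1 (min_gromovProduct_le x y (y * z))
  have hle := min_le_iff.1 (min_gromovProduct_le x (y * z) y)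
  omega

/-- The induction needs the bound strengthened by the loss against a preceding factor `e t`, which
is decided by the first factor of the chain alone. -/
theorem length_add_gromovProduct_le_norm_prod {ι : Type*} {r : ι → ι → Prop} [Std.Refl r]
    {e : ι → FreeGroup α}
    (he : ∀ t s q, r t s → r s q →
      gromovProduct (e t)⁻¹ (e s) + gromovProduct (e s)⁻¹ (e q) < (e s).norm)
    {t : ι} {L : List ι} (hL : (t :: L).IsChain r) :
    L.length + gromovProduct (e t)⁻¹ (L.map e).prod ≤ (L.map e).prod.norm ∧
      ∀ s ∈ L.head?, gromovProduct (e t)⁻¹ (L.map e).prod = gromovProduct (e t)⁻¹ (e s) := by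
  induction L generalizing t with
  | nil => simp [gromovProduct_one_right]
  | cons s L ih =>
    obtain ⟨hts, hsL⟩ := List.isChain_cons_cons.1 hL
    obtain ⟨hlen, hhead⟩ := ih hsL
    have hlt : gromovProduct (e t)⁻¹ (e s) + gromovProduct (e s)⁻¹ (L.map e).prod <
        (e s).norm := by
      cases L with
      | nil =>
        rw [List.map_nil, List.prod_nil, gromovProduct_one_right]
        exact (Nat.le_add_right _ _).trans_lt (he t s s hts (refl s))
      | cons q L =>
        rw [hhead q rfl]
        exact he t s q hts (List.isChain_cons_cons.1 hsL).1
    have heq := gromovProduct_mul_right hlt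
    have hmul := norm_mul_add_two_mul_gromovProduct (e s) (L.map e).prod
    simp only [List.map_cons, List.prod_cons, List.length_cons, List.head?_cons,
      Option.mem_def, Option.some.injEq, forall_eq', heq, and_true]
    omega

theorem length_le_norm_prod {ι : Type*} {r : ι → ι → Prop} [Std.Refl r] {e : ι → FreeGroup α}
    (he : ∀ t s q, r t s → r s q →
      gromovProduct (e t)⁻¹ (e s) + gromovProduct (e s)⁻¹ (e q) < (e s).norm)
    {L : List ι} (hL : L.IsChain r) : L.length ≤ (L.map e).prod.norm := by
  cases L with
  | nil => exact Nat.zero_le _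
  | cons s L =>
    have hchain : (s :: s :: L).IsChain r := List.isChain_cons_cons.2 ⟨refl s, hL⟩
    exact (Nat.le_add_right _ _).trans (length_add_gromovProduct_le_norm_prod he hchain).1

theorem exists_halves_of_two_mul_gromovProduct_eq {x y : FreeGroup α} (hnorm : x.norm ≤ y.norm)
    (hleft : 2 * gromovProduct y x = x.norm) (hright : 2 * gromovProduct x⁻¹ y⁻¹ = x.norm) :
    ∃ P S T, x.toWord = P ++ S ∧ y.toWord = P ++ T ++ S := by
  obtain ⟨P, Y, S, hyP, hxP, -, hP⟩ := exists_prefix_length_eq_gromovProduct y x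
  obtain ⟨X, Y', S', hxS, hyS, hS⟩ := exists_suffix_length_eq_gromovProduct x y
  have hxlen : x.norm = P.length + S.length := by rw [FreeGroup.norm, hxP, List.length_append]
  have hylen : y.norm = Y'.length + S'.length := by rw [FreeGroup.norm, hyS, List.length_append]
  obtain ⟨-, rfl⟩ : P = X ∧ S = S' :=
    List.append_inj' (hxP.symm.trans hxS) (by omega)
  obtain ⟨T, rfl⟩ : P <+: Y' :=
    List.prefix_of_prefix_length_le ⟨Y, hyP.symm⟩ ⟨S, hyS.symm⟩ (by omega)
  exact ⟨P, S, T, hxP, hyS⟩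

/-- If `x = P S` and `y = P T S` then conjugating `(x, x⁻¹ y)` by `S` gives `(S P, T)`. -/
theorem exists_norm_conj_add_norm_conj_le {x y : FreeGroup α} (hnorm : x.norm ≤ y.norm)
    (hleft : 2 * gromovProduct y x = x.norm) (hright : 2 * gromovProduct x⁻¹ y⁻¹ = x.norm) :
    ∃ c : FreeGroup α, (c * x * c⁻¹).norm + (c * (x⁻¹ * y) * c⁻¹).norm ≤ y.norm := by
  obtain ⟨P, S, T, hx, hy⟩ := exists_halves_of_two_mul_gromovProduct_eq hnorm hleft hright
  have hx' : x = mk P * mk S := by rw [mul_mk, ← hx, mk_toWord]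
  have hy' : y = mk P * mk T * mk S := by rw [mul_mk, mul_mk, ← hy, mk_toWord]
  have hSP : mk S * x * (mk S)⁻¹ = mk (S ++ P) := by rw [hx', ← mul_mk]; group
  have hT : mk S * (x⁻¹ * y) * (mk S)⁻¹ = mk T := by rw [hx', hy']; group
  have hSPle := norm_mk_le (L₁ := S ++ P)
  have hTle := norm_mk_le (L₁ := T)
  have hylen : y.norm = P.length + T.length + S.length := by
    rw [FreeGroup.norm, hy, List.length_append, List.length_append]
  rw [List.length_append] at hSPle
  refine ⟨mk S, ?_⟩
  rw [hSP, hT]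
  omega

end Cancellation

section Nielsen

variable {G : Type*} [Group G]

/-- Nielsen equivalence of pairs of group elements. Simultaneous conjugation is admitted as a move;
on generating pairs it is a composition of the other moves. -/
inductive NielsenEquiv (x y : G) : G → G → Prop
  | refl : NielsenEquiv x y x y
  | swap {u v : G} : NielsenEquiv x y u v → NielsenEquiv x y v u
  | inv_left {u v : G} : NielsenEquiv x y u v → NielsenEquiv x y u⁻¹ v
  | mul_right {u v : G} : NielsenEquiv x y u v → NielsenEquiv x y (u * v) v
  | conj {u v : G} (c : G) :
      NielsenEquiv x y u v → NielsenEquiv x y (c * u * c⁻¹) (c * v * c⁻¹)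

namespace NielsenEquiv

variable {x y u v p q : G}

theorem inv_right (h : NielsenEquiv x y u v) : NielsenEquiv x y u v⁻¹ :=
  h.swap.inv_left.swap

theorem mul_left (h : NielsenEquiv x y u v) : NielsenEquiv x y (v * u) v := by
  simpa [mul_assoc] using h.mul_right.conj v

theorem trans (h : NielsenEquiv x y u v) (h' : NielsenEquiv u v p q) : NielsenEquiv x y p q := by
  induction h' with
  | refl => exact h
  | swap _ ih => exact ih.swap
  | inv_left _ ih => exact ih.inv_left
  | mul_right _ ih => exact ih.mul_right
  | conj c _ ih => exact ih.conj c

theorem symm (h : NielsenEquiv x y u v) : NielsenEquiv u v x y := by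
  induction h with
  | refl => exact refl
  | swap _ ih => exact refl.swap.trans ih
  | @inv_left u v _ ih =>
    have hback : NielsenEquiv u⁻¹ v u⁻¹⁻¹ v := refl.inv_left
    rw [inv_inv] at hback
    exact hback.trans ih
  | @mul_right u v _ ih =>
    have hback : NielsenEquiv (u * v) v (u * v * v⁻¹) v⁻¹⁻¹ := refl.inv_right.mul_right.inv_right
    rw [mul_inv_cancel_right, inv_inv] at hback
    exact hback.trans ih
  | @conj u v c _ ih =>
    have hback : NielsenEquiv (c * u * c⁻¹) (c * v * c⁻¹)
        (c⁻¹ * (c * u * c⁻¹) * c⁻¹⁻¹) (c⁻¹ * (c * v * c⁻¹) * c⁻¹⁻¹) := refl.conj c⁻¹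
    exact trans (by simpa [mul_assoc] using hback) ih

theorem closure_eq_top (h : NielsenEquiv x y u v) (hxy : Subgroup.closure {x, y} = ⊤) :
    Subgroup.closure {u, v} = ⊤ := by
  induction h with
  | refl => exact hxy
  | swap _ ih => rwa [Set.pair_comm]
  | @inv_left u v _ ih =>
    rw [eq_top_iff, ← ih, Subgroup.closure_le, Set.pair_subset_iff]
    exact ⟨inv_mem_iff.1 (Subgroup.subset_closure (.inl rfl)), Subgroup.subset_closure (.inr rfl)⟩
  | @mul_right u v _ ih =>
    have hv : v ∈ Subgroup.closure {u * v, v} := Subgroup.subset_closure (.inr rfl)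
    rw [eq_top_iff, ← ih, Subgroup.closure_le, Set.pair_subset_iff]
    exact ⟨(Subgroup.mul_mem_cancel_right _ hv).1 (Subgroup.subset_closure (.inl rfl)), hv⟩
  | @conj u v c _ ih =>
    have himage : ({c * u * c⁻¹, c * v * c⁻¹} : Set G) =
        (MulAut.conj c).toMonoidHom '' {u, v} := by simp [Set.image_pair]
    rw [himage, ← MonoidHom.map_closure, ih]
    exact Subgroup.map_top_of_surjective _ (MulAut.conj c).surjective

end NielsenEquiv

/-- The value of the letter `s` of `FreeGroup ι` under the assignment `f` of the generators. -/
def letterValue {ι : Type*} (f : ι → G) (s : ι × Bool) : G :=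
  cond s.2 (f s.1) (f s.1)⁻¹

theorem letterValue_not {ι : Type*} (f : ι → G) (i : ι) (b : Bool) :
    letterValue f (i, !b) = (letterValue f (i, b))⁻¹ := by
  cases b <;> simp [letterValue]

theorem lift_eq_prod_map_letterValue {ι : Type*} [DecidableEq ι] (f : ι → G) (x : FreeGroup ι) :
    FreeGroup.lift f x = (x.toWord.map (letterValue f)).prod := by
  conv_lhs => rw [← mk_toWord (x := x), lift_mk]
  rfl

theorem nielsenEquiv_letterValue (u v : G) {s t : Fin 2 × Bool} (hst : s.1 ≠ t.1) :
    NielsenEquiv u v (letterValue ![u, v] s) (letterValue ![u, v] t) := by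
  obtain ⟨i, b⟩ := s
  obtain ⟨j, c⟩ := t
  have h : NielsenEquiv u v (![u, v] i) (![u, v] j) := by
    fin_cases i <;> fin_cases j
    exacts [absurd rfl hst, .refl, .swap .refl, absurd rfl hst]
  cases b <;> cases c
  exacts [h.inv_left.inv_right, h.inv_left, h.inv_right, h]

end Nielsen

section Minimal

variable {α : Type*} [DecidableEq α]

/-- A pair of elements of a free group is Nielsen minimal if its total length is the least in its
Nielsen equivalence class. -/
def IsNielsenMinimal (u v : FreeGroup α) : Prop :=
  ∀ ⦃x y⦄, NielsenEquiv u v x y → u.norm + v.norm ≤ x.norm + y.norm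

theorem exists_isNielsenMinimal (u v : FreeGroup α) :
    ∃ x y, NielsenEquiv u v x y ∧ IsNielsenMinimal x y := by
  obtain ⟨⟨x, y⟩, hxy, hmin⟩ := exists_minimalFor_of_wellFoundedLT
    (fun p : FreeGroup α × FreeGroup α => NielsenEquiv u v p.1 p.2)
    (fun p => p.1.norm + p.2.norm) ⟨(u, v), .refl⟩
  exact ⟨x, y, hxy, fun x' y' h => (le_total _ _).elim id (hmin (j := (x', y')) (hxy.trans h))⟩

namespace IsNielsenMinimal

variable {u v : FreeGroup α}

theorem of_nielsenEquiv {x y : FreeGroup α} (h : IsNielsenMinimal u v) (hxy : NielsenEquiv u v x y)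
    (hnorm : x.norm + y.norm = u.norm + v.norm) : IsNielsenMinimal x y :=
  fun _ _ h' => hnorm.trans_le (h (hxy.trans h'))

theorem inv_right (h : IsNielsenMinimal u v) : IsNielsenMinimal u v⁻¹ :=
  h.of_nielsenEquiv (.inv_right .refl) (by rw [norm_inv_eq])

theorem swap (h : IsNielsenMinimal u v) : IsNielsenMinimal v u :=
  h.of_nielsenEquiv (.swap .refl) (add_comm _ _)

theorem apply_letterValue {s t : Fin 2 × Bool} (h : IsNielsenMinimal u v) (hst : s.1 ≠ t.1) :
    IsNielsenMinimal (letterValue ![u, v] s) (letterValue ![u, v] t) := by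
  refine h.of_nielsenEquiv (nielsenEquiv_letterValue u v hst) ?_
  have hnorm (i : Fin 2) (b : Bool) :
      (letterValue ![u, v] (i, b)).norm = (![u, v] i).norm := by
    cases b <;> simp [letterValue]
  obtain ⟨i, b⟩ := s
  obtain ⟨j, c⟩ := t
  rw [hnorm, hnorm]
  fin_cases i <;> fin_cases j
  exacts [absurd rfl hst, rfl, add_comm _ _, absurd rfl hst]

theorem two_mul_gromovProduct_inv_le_left (h : IsNielsenMinimal u v) :
    2 * gromovProduct u⁻¹ v ≤ u.norm := by
  have hle := h (NielsenEquiv.swap (.mul_left (.swap .refl)))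
  have hadd := norm_mul_add_two_mul_gromovProduct u v
  omega

theorem two_mul_gromovProduct_inv_le_right (h : IsNielsenMinimal u v) :
    2 * gromovProduct u⁻¹ v ≤ v.norm := by
  have hle := h (.mul_right .refl)
  have hadd := norm_mul_add_two_mul_gromovProduct u v
  omega

/-- Otherwise `u` is cancelled by half against `v` from both sides, and conjugation by one of the
halves shortens the pair `(u, u⁻¹ v)`. -/
theorem gromovProduct_add_gromovProduct_inv_lt (h : IsNielsenMinimal u v) (hu : u ≠ 1) :
    gromovProduct v u + gromovProduct u⁻¹ v⁻¹ < u.norm := by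
  by_contra! hge
  have hpos : 0 < u.norm := Nat.pos_of_ne_zero (mt norm_eq_zero.1 hu)
  have hleft := h.inv_right.swap.two_mul_gromovProduct_inv_le_right
  have hright := h.inv_right.two_mul_gromovProduct_inv_le_left
  have hnorm := h.inv_right.two_mul_gromovProduct_inv_le_right
  rw [inv_inv] at hleft
  rw [norm_inv_eq] at hnorm
  obtain ⟨c, hc⟩ := exists_norm_conj_add_norm_conj_le (by omega : u.norm ≤ v.norm)
    (by omega) (by omega)
  have hdiv : NielsenEquiv u v u⁻¹⁻¹ (u⁻¹ * v) :=
    .inv_left (.swap (.mul_left (.swap (.inv_left .refl))))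
  rw [inv_inv] at hdiv
  have hle := h (hdiv.conj c)
  omega

theorem gromovProduct_inv_add_gromovProduct_inv_lt (h : IsNielsenMinimal u v) (hu : u ≠ 1) :
    gromovProduct v⁻¹ u + gromovProduct u⁻¹ v⁻¹ < u.norm := by
  have hleft := h.swap.two_mul_gromovProduct_inv_le_right
  have hright := h.inv_right.two_mul_gromovProduct_inv_le_left
  have hmin := min_le_iff.1 (min_gromovProduct_le u⁻¹ v⁻¹ u)
  have hself := two_mul_gromovProduct_inv_self_lt hu
  omega

theorem gromovProduct_letterValue_add_lt (h : IsNielsenMinimal u v) (hu : u ≠ 1) (hv : v ≠ 1)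
    {t s q : Fin 2 × Bool} (hts : t.1 = s.1 → t.2 = s.2) (hsq : s.1 = q.1 → s.2 = q.2) :
    gromovProduct (letterValue ![u, v] t)⁻¹ (letterValue ![u, v] s) +
        gromovProduct (letterValue ![u, v] s)⁻¹ (letterValue ![u, v] q) <
      (letterValue ![u, v] s).norm := by
  have hs : letterValue ![u, v] s ≠ 1 := by
    obtain ⟨i, b⟩ := s
    fin_cases i <;> cases b <;> simpa [letterValue]
  have hself := two_mul_gromovProduct_inv_self_lt hs
  by_cases ht : t.1 = s.1 <;> by_cases hq : s.1 = q.1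
  · rw [Prod.ext ht (hts ht), ← Prod.ext hq (hsq hq)]
    omega
  · have hle := (h.apply_letterValue hq).two_mul_gromovProduct_inv_le_left
    rw [Prod.ext ht (hts ht)]
    omega
  · have hle := (h.apply_letterValue ht).two_mul_gromovProduct_inv_le_right
    rw [← Prod.ext hq (hsq hq)]
    omega
  · have hst := h.apply_letterValue (Ne.symm ht)
    obtain rfl | rfl : q = t ∨ q = (t.1, !t.2) := by
      obtain ⟨i, b⟩ := t
      obtain ⟨j, c⟩ := q
      cases b <;> cases c <;> simp_all <;> omega
    · simpa using hst.inv_right.gromovProduct_add_gromovProduct_inv_lt hs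
    · rw [letterValue_not]
      exact hst.gromovProduct_inv_add_gromovProduct_inv_lt hs

theorem norm_le_norm_lift (h : IsNielsenMinimal u v) (hu : u ≠ 1) (hv : v ≠ 1)
    (x : FreeGroup (Fin 2)) : x.norm ≤ (FreeGroup.lift ![u, v] x).norm := by
  let r (s t : Fin 2 × Bool) : Prop := s.1 = t.1 → s.2 = t.2
  have : Std.Refl r := ⟨fun _ _ => rfl⟩
  rw [lift_eq_prod_map_letterValue]
  exact length_le_norm_prod (r := r)
    (fun _ _ _ => h.gromovProduct_letterValue_add_lt hu hv) isReduced_toWord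

end IsNielsenMinimal

end Minimal

section Generation

variable {u v : FreeGroup (Fin 2)}

theorem ne_one_of_closure_pair_eq_top (h : Subgroup.closure {u, v} = ⊤) : u ≠ 1 := by
  rintro rfl
  rw [Subgroup.closure_insert_one, ← Subgroup.zpowers_eq_closure] at h
  have hmem (x : FreeGroup (Fin 2)) : x ∈ Subgroup.zpowers v := h ▸ Subgroup.mem_top x
  obtain ⟨i, hi⟩ := Subgroup.mem_zpowers_iff.1 (hmem (of 0))
  obtain ⟨j, hj⟩ := Subgroup.mem_zpowers_iff.1 (hmem (of 1))
  have hcomm : (of 0 : FreeGroup (Fin 2)) * of 1 = of 1 * of 0 := by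
    rw [← hi, ← hj, ← zpow_add, ← zpow_add, add_comm]
  exact absurd hcomm (by decide)

theorem range_lift_pair (h : Subgroup.closure {u, v} = ⊤) :
    (FreeGroup.lift ![u, v]).range = ⊤ := by
  rw [range_lift_eq_closure, Matrix.range_cons, Matrix.range_cons, Matrix.range_empty,
    Set.union_empty, Set.singleton_union, h]

theorem IsNielsenMinimal.exists_letterValue_eq_of (h : IsNielsenMinimal u v)
    (hgen : Subgroup.closure {u, v} = ⊤) (i : Fin 2) : ∃ s, letterValue ![u, v] s = of i := by
  obtain ⟨x, hx⟩ : of i ∈ (FreeGroup.lift ![u, v]).range :=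
    range_lift_pair hgen ▸ Subgroup.mem_top _
  have hv : Subgroup.closure {v, u} = ⊤ := Set.pair_comm v u ▸ hgen
  have hle := h.norm_le_norm_lift (ne_one_of_closure_pair_eq_top hgen)
    (ne_one_of_closure_pair_eq_top hv) x
  have hx1 : x ≠ 1 := by
    rintro rfl
    exact of_ne_one i (hx.symm.trans (_root_.map_one _))
  have hpos : 0 < x.norm := Nat.pos_of_ne_zero (mt norm_eq_zero.1 hx1)
  rw [hx, norm_of] at hle
  obtain ⟨s, hs⟩ := List.length_eq_one_iff.1 (le_antisymm hle hpos)
  refine ⟨s, ?_⟩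
  rw [← hx, lift_eq_prod_map_letterValue, hs, List.map_singleton, List.prod_singleton]

theorem nielsenEquiv_of_closure_pair_eq_top (h : Subgroup.closure {u, v} = ⊤) :
    NielsenEquiv (of 0) (of 1) u v := by
  obtain ⟨x, y, huv, hmin⟩ := exists_isNielsenMinimal u v
  obtain ⟨s, hs⟩ := hmin.exists_letterValue_eq_of (huv.closure_eq_top h) 0
  obtain ⟨t, ht⟩ := hmin.exists_letterValue_eq_of (huv.closure_eq_top h) 1
  have hst : s.1 ≠ t.1 := by
    obtain ⟨i, b⟩ := s
    obtain ⟨j, c⟩ := t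
    rintro rfl
    obtain rfl | rfl := Bool.eq_or_eq_not c b
    · exact absurd (hs.symm.trans ht) (by decide)
    · rw [letterValue_not, hs] at ht
      exact absurd ht (by decide)
  have hbasis := nielsenEquiv_letterValue x y hst
  rw [hs, ht] at hbasis
  exact (huv.trans hbasis).symm

end Generation

section Positive

variable {G : Type*} [Group G]

/-- The pairs obtained from `(x, y)` by the Nielsen moves that invert nothing. -/
inductive PositivePair (x y : G) : G → G → Prop
  | refl : PositivePair x y x y
  | swap {p q : G} : PositivePair x y p q → PositivePair x y q p
  | mul_right {p q : G} : PositivePair x y p q → PositivePair x y (p * q) q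

/-- The pairs that become positive over `(a ^ ±1, b ^ ±1)` after a common conjugation and a change
of the signs of their entries. -/
def IsSignedPositivePair (a b u v : G) : Prop :=
  ∃ (ε δ η θ : ℤˣ) (c p q : G), PositivePair (a ^ (ε : ℤ)) (b ^ (δ : ℤ)) p q ∧
    u = c * p ^ (η : ℤ) * c⁻¹ ∧ v = c * q ^ (θ : ℤ) * c⁻¹

variable {a b u v : G}

theorem PositivePair.mem_closure {x y p q : G} (h : PositivePair x y p q) :
    p ∈ Submonoid.closure {x, y} ∧ q ∈ Submonoid.closure {x, y} := by
  induction h with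
  | refl => exact ⟨Submonoid.subset_closure (.inl rfl), Submonoid.subset_closure (.inr rfl)⟩
  | swap _ ih => exact ih.symm
  | mul_right _ ih => exact ⟨mul_mem ih.1 ih.2, ih.2⟩

namespace IsSignedPositivePair

theorem of_positivePair {ε δ : ℤˣ} (h : PositivePair (a ^ (ε : ℤ)) (b ^ (δ : ℤ)) u v) :
    IsSignedPositivePair a b u v :=
  ⟨ε, δ, 1, 1, 1, u, v, h, by simp, by simp⟩

theorem swap (h : IsSignedPositivePair a b u v) : IsSignedPositivePair a b v u :=
  let ⟨ε, δ, η, θ, c, p, q, hpq, hu, hv⟩ := h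
  ⟨ε, δ, θ, η, c, q, p, hpq.swap, hv, hu⟩

theorem inv_left (h : IsSignedPositivePair a b u v) : IsSignedPositivePair a b u⁻¹ v :=
  let ⟨ε, δ, η, θ, c, p, q, hpq, hu, hv⟩ := h
  ⟨ε, δ, -η, θ, c, p, q, hpq, by rw [hu, Units.val_neg]; group, hv⟩

theorem inv_right (h : IsSignedPositivePair a b u v) : IsSignedPositivePair a b u v⁻¹ :=
  h.swap.inv_left.swap

theorem conj (h : IsSignedPositivePair a b u v) (d : G) :
    IsSignedPositivePair a b (d * u * d⁻¹) (d * v * d⁻¹) :=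
  let ⟨ε, δ, η, θ, c, p, q, hpq, hu, hv⟩ := h
  ⟨ε, δ, η, θ, d * c, p, q, hpq, by rw [hu]; group, by rw [hv]; group⟩

end IsSignedPositivePair

/-- Dividing undoes the last multiplication in the construction of a positive pair, and at the base
pair it amounts to changing the sign of a generator. -/
theorem PositivePair.isSignedPositivePair_div {ε δ : ℤˣ}
    (h : PositivePair (a ^ (ε : ℤ)) (b ^ (δ : ℤ)) u v) :
    IsSignedPositivePair a b (u * v⁻¹) v ∧ IsSignedPositivePair a b (v * u⁻¹) u := by
  induction h with
  | refl =>
    have hleft : IsSignedPositivePair a b _ _ :=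
      .of_positivePair (ε := -ε) (δ := δ) (.mul_right (.swap .refl))
    have hright : IsSignedPositivePair a b _ _ :=
      .of_positivePair (ε := ε) (δ := -δ) (.mul_right .refl)
    exact ⟨by simpa using hright.inv_right, by simpa using hleft.inv_right⟩
  | swap _ ih => exact ih.symm
  | @mul_right u v h _ =>
    have hleft := IsSignedPositivePair.of_positivePair h
    have hright := IsSignedPositivePair.of_positivePair h.swap.mul_right
    exact ⟨by simpa using hleft, by simpa [mul_assoc] using (hright.conj u).swap.inv_left⟩

theorem IsSignedPositivePair.mul_right (h : IsSignedPositivePair a b u v) :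
    IsSignedPositivePair a b (u * v) v := by
  obtain ⟨ε, δ, η, θ, c, p, q, hpq, rfl, rfl⟩ := h
  suffices IsSignedPositivePair a b (p ^ (η : ℤ) * q ^ (θ : ℤ)) (q ^ (θ : ℤ)) by
    simpa [mul_assoc] using this.conj c
  have hmul := of_positivePair hpq.mul_right
  have hdiv := hpq.isSignedPositivePair_div.1
  obtain rfl | rfl := Int.units_eq_one_or η <;> obtain rfl | rfl := Int.units_eq_one_or θ
  · simpa using hmul
  · simpa using hdiv.inv_right
  · simpa [mul_assoc] using hdiv.inv_left.conj q⁻¹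
  · simpa [mul_assoc] using (hmul.conj q).inv_left.inv_right

theorem NielsenEquiv.isSignedPositivePair (h : NielsenEquiv a b u v) :
    IsSignedPositivePair a b u v := by
  induction h with
  | refl => exact .of_positivePair (ε := 1) (δ := 1) (by simpa using .refl)
  | swap _ ih => exact ih.swap
  | inv_left _ ih => exact ih.inv_left
  | mul_right _ ih => exact ih.mul_right
  | conj c _ ih => exact ih.conj c

theorem IsSignedPositivePair.exists_isConj (h : IsSignedPositivePair a b u v) :
    ∃ ε δ : ℤˣ, ∃ z ∈ Submonoid.closure {a ^ (ε : ℤ), b ^ (δ : ℤ)}, IsConj z u := by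
  obtain ⟨ε, δ, η, -, c, p, q, hpq, rfl, -⟩ := h
  have hp := hpq.mem_closure.1
  obtain rfl | rfl := Int.units_eq_one_or η
  · exact ⟨ε, δ, p, hp, isConj_iff.2 ⟨c, by simp⟩⟩
  · refine ⟨-ε, -δ, p⁻¹, ?_, isConj_iff.2 ⟨c, by simp⟩⟩
    rw [← Submonoid.mem_closure_inv]
    simpa [Set.inv_insert] using hp

end Positive

theorem exists_isConj_mem_closure_of_isPrimitive {w : FreeGroup (Fin 2)} (h : IsPrimitive w) :
    ∃ ε : Fin 2 → ℤˣ, ∃ z ∈ Submonoid.closure (Set.range fun i => of i ^ (ε i : ℤ)),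
      IsConj z w := by
  obtain ⟨φ, rfl⟩ := h
  have hgen : Subgroup.closure {φ (of 0), φ (of 1)} = ⊤ := by
    have himage : ({φ (of 0), φ (of 1)} : Set (FreeGroup (Fin 2))) =
        φ.toMonoidHom '' Set.range of := by
      ext
      simp [Fin.exists_fin_two, eq_comm]
    rw [himage, ← MonoidHom.map_closure, closure_range_of]
    exact Subgroup.map_top_of_surjective _ φ.surjective
  obtain ⟨ε, δ, z, hz, hconj⟩ :=
    (nielsenEquiv_of_closure_pair_eq_top hgen).isSignedPositivePair.exists_isConj
  refine ⟨![ε, δ], z, ?_, hconj⟩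
  convert hz
  ext
  simp [Fin.exists_fin_two, eq_comm]

section Length

variable {α : Type*}

/-- The sum of the exponents of the generators in an element of a free group, the exponents of the
generator `i` being counted with the sign `ε i`. -/
def signedExponentSum (ε : α → ℤˣ) : FreeGroup α →* Multiplicative ℤ :=
  FreeGroup.lift fun i => Multiplicative.ofAdd (ε i : ℤ)

variable {ε : α → ℤˣ}

theorem toAdd_signedExponentSum_of_zpow (i : α) (n : ℤ) :
    (signedExponentSum ε (of i ^ n)).toAdd = ε i * n := by
  simp [signedExponentSum, mul_comm]

variable [DecidableEq α]

theorem norm_le_signedExponentSum {z : FreeGroup α}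
    (hz : z ∈ Submonoid.closure (Set.range fun i => of i ^ (ε i : ℤ))) :
    (z.norm : ℤ) ≤ (signedExponentSum ε z).toAdd := by
  induction hz using Submonoid.closure_induction with
  | mem z hz =>
    obtain ⟨i, rfl⟩ := hz
    rw [toAdd_signedExponentSum_of_zpow]
    obtain h | h := Int.units_eq_one_or (ε i) <;> simp [h]
  | one => simp
  | mul x y _ _ hx hy =>
    rw [_root_.map_mul, toAdd_mul]
    have := FreeGroup.norm_mul_le x y
    omega

theorem norm_pow_le (x : FreeGroup α) (N : ℕ) : (x ^ N).norm ≤ N * x.norm := by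
  induction N with
  | zero => simp
  | succ N ih =>
    rw [pow_succ, Nat.succ_mul]
    exact (FreeGroup.norm_mul_le _ _).trans (Nat.add_le_add_right ih _)

theorem norm_pow_of_isCyclicallyReduced {x : FreeGroup α} (hx : IsCyclicallyReduced x.toWord)
    (N : ℕ) : (x ^ N).norm = N * x.norm := by
  rw [FreeGroup.norm, toWord_pow, (hx.flatten_replicate N).isReduced.reduce_eq]
  simp [FreeGroup.norm]

theorem norm_le_of_isConj {w z : FreeGroup α} (hw : IsCyclicallyReduced w.toWord)
    (hzw : IsConj z w) : w.norm ≤ z.norm := by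
  obtain ⟨c, rfl⟩ := isConj_iff.1 hzw
  by_contra! hlt
  have hpow (N : ℕ) : N * (c * z * c⁻¹).norm ≤ N * z.norm + 2 * c.norm := by
    rw [← norm_pow_of_isCyclicallyReduced hw, conj_pow]
    have h₁ := FreeGroup.norm_mul_le (c * z ^ N) c⁻¹
    have h₂ := FreeGroup.norm_mul_le c (z ^ N)
    have h₃ := norm_pow_le z N
    rw [norm_inv_eq] at h₁
    omega
  have := hpow (2 * c.norm + 1)
  nlinarith

theorem norm_le_signedExponentSum_of_isConj {w z : FreeGroup α}
    (hw : IsCyclicallyReduced w.toWord) (hzw : IsConj z w)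
    (hz : z ∈ Submonoid.closure (Set.range fun i => of i ^ (ε i : ℤ))) :
    (w.norm : ℤ) ≤ (signedExponentSum ε w).toAdd := by
  have hsum : signedExponentSum ε z = signedExponentSum ε w :=
    isConj_iff_eq.1 ((signedExponentSum ε).map_isConj hzw)
  rw [← hsum]
  exact (Int.ofNat_le.2 (norm_le_of_isConj hw hzw)).trans (norm_le_signedExponentSum hz)

end Length

section Word

variable {α : Type*} [DecidableEq α]

theorem isReduced_flatten_map_toWord {L : List (FreeGroup α)} (hone : 1 ∉ L)
    (hL : ∀ x ∈ L, ∀ y ∈ L, IsReduced (x.toWord ++ y.toWord)) :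
    IsReduced (L.map toWord).flatten := by
  rw [FreeGroup.IsReduced, List.isChain_flatten (by simpa using hone)]
  refine ⟨List.forall_mem_map.2 fun _ _ => isReduced_toWord, List.Pairwise.isChain ?_⟩
  exact List.pairwise_map.2 <| List.pairwise_of_forall_mem_list fun x hx y hy =>
    (List.isChain_append.1 (hL x hx y hy)).2.2

theorem prod_eq_mk_flatten_map_toWord (L : List (FreeGroup α)) :
    L.prod = mk (L.map toWord).flatten := by
  induction L with
  | nil => rfl
  | cons x L ih => rw [List.prod_cons, ih, List.map_cons, List.flatten_cons, ← mul_mk, mk_toWord]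

theorem toWord_prod {L : List (FreeGroup α)} (hone : 1 ∉ L)
    (hL : ∀ x ∈ L, ∀ y ∈ L, IsReduced (x.toWord ++ y.toWord)) :
    L.prod.toWord = (L.map toWord).flatten := by
  rw [prod_eq_mk_flatten_map_toWord, toWord_mk,
    (isReduced_flatten_map_toWord hone hL).reduce_eq]

theorem isCyclicallyReduced_toWord_prod {L : List (FreeGroup α)} (hone : 1 ∉ L)
    (hL : ∀ x ∈ L, ∀ y ∈ L, IsReduced (x.toWord ++ y.toWord)) :
    IsCyclicallyReduced L.prod.toWord := by
  have hred : IsReduced ((L ++ L).map toWord).flatten :=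
    isReduced_flatten_map_toWord (by simpa using hone) (by simpa using hL)
  rw [List.map_append, List.flatten_append, ← toWord_prod hone hL] at hred
  exact ⟨isReduced_toWord, (List.isChain_append.1 hred).2.2⟩

theorem norm_prod {L : List (FreeGroup α)} (hone : 1 ∉ L)
    (hL : ∀ x ∈ L, ∀ y ∈ L, IsReduced (x.toWord ++ y.toWord)) :
    L.prod.norm = (L.map FreeGroup.norm).sum := by
  rw [FreeGroup.norm, toWord_prod hone hL, List.length_flatten, List.map_map]
  rfl

theorem toWord_of_zpow (i : α) (n : ℤ) :
    (of i ^ n).toWord = List.replicate n.natAbs (i, decide (0 ≤ n)) := by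
  cases n with
  | ofNat n => simp [toWord_of_pow]
  | negSucc n => simp [zpow_negSucc, toWord_inv, toWord_of_pow, invRev]

variable {i j : α}

theorem isReduced_toWord_of_zpow_append (hij : i ≠ j) (n : ℤ) {m : ℤ} (hm : m ≠ 0)
    {L : List (α × Bool)} (hL : IsReduced ((of j ^ m).toWord ++ L)) :
    IsReduced ((of i ^ n).toWord ++ ((of j ^ m).toWord ++ L)) := by
  refine List.isChain_append.2 ⟨isReduced_toWord, hL, fun s hs t ht hst => ?_⟩
  obtain ⟨q, hq⟩ := Nat.exists_eq_succ_of_ne_zero (Int.natAbs_ne_zero.2 hm)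
  rw [toWord_of_zpow] at hs
  rw [toWord_of_zpow, hq, List.replicate_succ, List.cons_append, List.head?_cons] at ht
  rw [List.eq_of_mem_replicate (List.mem_of_mem_getLast? hs), ← Option.some.inj ht] at hst
  exact absurd hst hij

theorem toWord_of_zpow_mul_of_zpow (hij : i ≠ j) (n : ℤ) {m : ℤ} (hm : m ≠ 0) :
    (of i ^ n * of j ^ m).toWord = (of i ^ n).toWord ++ (of j ^ m).toWord := by
  have hred : IsReduced ((of i ^ n).toWord ++ (of j ^ m).toWord) := by
    simpa using isReduced_toWord_of_zpow_append (L := []) hij n hm (by simp [isReduced_toWord])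
  rw [toWord_mul, hred.reduce_eq]

theorem norm_of_zpow_mul_of_zpow (hij : i ≠ j) (n : ℤ) {m : ℤ} (hm : m ≠ 0) :
    (of i ^ n * of j ^ m).norm = n.natAbs + m.natAbs := by
  rw [FreeGroup.norm, toWord_of_zpow_mul_of_zpow hij n hm, List.length_append, toWord_of_zpow,
    toWord_of_zpow, List.length_replicate, List.length_replicate]

theorem isReduced_toWord_append_of_zpow_mul_of_zpow (hij : i ≠ j) (n : ℤ) {m n' m' : ℤ} (hm : m ≠ 0)
    (hn' : n' ≠ 0) (hm' : m' ≠ 0) :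
    IsReduced ((of i ^ n * of j ^ m).toWord ++ (of i ^ n' * of j ^ m').toWord) := by
  have hblock := isReduced_toWord (x := of i ^ n' * of j ^ m')
  rw [toWord_of_zpow_mul_of_zpow hij n' hm'] at hblock
  rw [toWord_of_zpow_mul_of_zpow hij n hm, toWord_of_zpow_mul_of_zpow hij n' hm',
    List.append_assoc]
  exact isReduced_toWord_of_zpow_append hij n hm
    (isReduced_toWord_of_zpow_append hij.symm m hn' hblock)

end Word

section Alternating

variable {α : Type*} {i j : α}

/-- The word `i ^ n₁ j ^ m₁ ⋯ i ^ n_k j ^ m_k` as an element of the free group. -/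
def alternatingWord {k : ℕ} (i j : α) (n m : Fin k → ℤ) : FreeGroup α :=
  ((List.finRange k).map fun l => of i ^ n l * of j ^ m l).prod

variable {k : ℕ} {n m : Fin k → ℤ}

theorem toAdd_signedExponentSum_alternatingWord (ε : α → ℤˣ) :
    (signedExponentSum ε (alternatingWord i j n m)).toAdd = ∑ l, (ε i * n l + ε j * m l) := by
  simp only [alternatingWord, map_list_prod, toAdd_list_sum, Fin.sum_univ_def, List.map_map,
    Function.comp_def, _root_.map_mul, toAdd_mul, toAdd_signedExponentSum_of_zpow]

theorem one_notMem_blocks (hij : i ≠ j) (hm : ∀ l, m l ≠ 0) :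
    1 ∉ (List.finRange k).map fun l => of i ^ n l * of j ^ m l := by
  classical
  intro hmem
  obtain ⟨l, -, hl⟩ := List.mem_map.1 hmem
  have hnorm := norm_of_zpow_mul_of_zpow hij (n l) (hm l)
  rw [hl, FreeGroup.norm_one] at hnorm
  have := hm l
  omega

variable [DecidableEq α]

theorem isReduced_append_of_mem_blocks (hij : i ≠ j) (hn : ∀ l, n l ≠ 0) (hm : ∀ l, m l ≠ 0) :
    ∀ x ∈ (List.finRange k).map fun l => of i ^ n l * of j ^ m l,
      ∀ y ∈ (List.finRange k).map fun l => of i ^ n l * of j ^ m l,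
        IsReduced (x.toWord ++ y.toWord) :=
  List.forall_mem_map.2 fun l _ => List.forall_mem_map.2 fun l' _ =>
    isReduced_toWord_append_of_zpow_mul_of_zpow hij (n l) (hm l) (hn l') (hm l')

theorem isCyclicallyReduced_toWord_alternatingWord (hij : i ≠ j) (hn : ∀ l, n l ≠ 0)
    (hm : ∀ l, m l ≠ 0) : IsCyclicallyReduced (alternatingWord i j n m).toWord :=
  isCyclicallyReduced_toWord_prod (one_notMem_blocks hij hm)
    (isReduced_append_of_mem_blocks hij hn hm)

theorem norm_alternatingWord (hij : i ≠ j) (hn : ∀ l, n l ≠ 0) (hm : ∀ l, m l ≠ 0) :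
    ((alternatingWord i j n m).norm : ℤ) = ∑ l, (|n l| + |m l|) := by
  rw [alternatingWord, norm_prod (one_notMem_blocks hij hm)
    (isReduced_append_of_mem_blocks hij hn hm), Fin.sum_univ_def, List.map_map]
  simp [Function.comp_def, norm_of_zpow_mul_of_zpow hij _ (hm _), Nat.cast_list_sum]

end Alternating

section Sign

variable {ι : Type*}

theorem mul_pos_of_abs_le_unit_mul {f : ι → ℤ} (hf : ∀ l, f l ≠ 0) {η : ℤˣ}
    (h : ∀ l, |f l| ≤ η * f l) (i j : ι) : 0 < f i * f j :=
  calc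
    0 < |f i| * |f j| := mul_pos (abs_pos.2 (hf i)) (abs_pos.2 (hf j))
    _ ≤ (η * f i) * (η * f j) :=
      mul_le_mul (h i) (h j) (abs_nonneg _) ((abs_nonneg _).trans (h i))
    _ = f i * f j := by rw [mul_mul_mul_comm, Int.units_coe_mul_self, one_mul]

theorem abs_le_unit_mul_of_sum_le [Fintype ι] {f g : ι → ℤ} {ε δ : ℤˣ}
    (hle : ∑ l, (|f l| + |g l|) ≤ ∑ l, (ε * f l + δ * g l)) (l : ι) :
    |f l| ≤ ε * f l ∧ |g l| ≤ δ * g l := by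
  have hunit (η : ℤˣ) (x : ℤ) : η * x ≤ |x| := by
    simpa [abs_mul, Int.isUnit_iff_abs_eq.1 η.isUnit] using le_abs_self ((η : ℤ) * x)
  have hterm (l : ι) : ε * f l + δ * g l ≤ |f l| + |g l| := add_le_add (hunit ε _) (hunit δ _)
  have heq := (Finset.sum_eq_sum_iff_of_le fun l _ => hterm l).1
    (le_antisymm (Finset.sum_le_sum fun l _ => hterm l) hle) l (Finset.mem_univ l)
  have hf := hunit ε (f l)
  have hg := hunit δ (g l)
  constructor <;> linarith

end Sign

end PrimitiveWord

/-- if the cyclically reduced word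
`w = a^{n₁} b^{m₁} ⋯ a^{n_k} b^{m_k}` (all `nᵢ`, `mᵢ` nonzero, `k ≥ 1`) is primitive
in the free group on `a = of 0`, `b = of 1`, then all `a`-exponents have the same
sign and all `b`-exponents have the same sign. -/
theorem primitive_word_exponent_signs (k : ℕ) (hk : 1 ≤ k) (n m : Fin k → ℤ)
    (hn : ∀ i, n i ≠ 0) (hm : ∀ i, m i ≠ 0)
    (a b : FreeGroup (Fin 2)) (ha : a = FreeGroup.of 0) (hb : b = FreeGroup.of 1)
    (w : FreeGroup (Fin 2))
    (hw : w = ((List.finRange k).map (fun i => a ^ (n i) * b ^ (m i))).prod)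
    (hprim : IsPrimitive w) :
    (∀ i j, 0 < n i * n j) ∧ (∀ i j, 0 < m i * m j) := by
  subst ha hb
  change w = PrimitiveWord.alternatingWord 0 1 n m at hw
  obtain ⟨ε, z, hz, hzw⟩ := PrimitiveWord.exists_isConj_mem_closure_of_isPrimitive hprim
  have h01 : (0 : Fin 2) ≠ 1 := zero_ne_one
  have hw_red : FreeGroup.IsCyclicallyReduced w.toWord :=
    hw ▸ PrimitiveWord.isCyclicallyReduced_toWord_alternatingWord h01 hn hm
  have hle := PrimitiveWord.norm_le_signedExponentSum_of_isConj hw_red hzw hz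
  rw [hw, PrimitiveWord.norm_alternatingWord h01 hn hm,
    PrimitiveWord.toAdd_signedExponentSum_alternatingWord] at hle
  have hsigns := PrimitiveWord.abs_le_unit_mul_of_sum_le hle
  exact ⟨PrimitiveWord.mul_pos_of_abs_le_unit_mul hn fun l => (hsigns l).1,
    PrimitiveWord.mul_pos_of_abs_le_unit_mul hm fun l => (hsigns l).2⟩
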